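/- Hermite reciprocity: for all natural numbers a, b and a finite-dimensional complex vector space V with dim V ≥ 2, the symmetric powers Sym^a(Sym^b V) and Sym^b(Sym^a V) are isomorphic as GL(V)-representations when dim V = 2; equivalently, for every partition λ with at most 2 rows, the multiplicity of the irreducible GL(V)-representation of highest weight λ in Sym^a(Sym^b V) equals its multiplicity in Sym^b(Sym^a V). -/

import Mathlib

/-!
For every vector space `V` there is a natural map `Sym^a (Sym^b V) → Sym^b (Sym^a V)`, called
`hermiteMap` below: place the tensor factors in an `a × b` grid, transpose the grid, and symmetrize.
Naturality (`hermiteMap_symMap`) gives equivariance under `GL(V)`.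

An element `x` of `Sym^a (Sym^b V)` is a polynomial function of degree `a` on the dual of `Sym^b V`,
and its image records the values of this function at the products `l₁ ⋯ l_b` of linear forms on `V`
(`ev_hermiteMap`). When `dim V = 2`, the functionals on `Sym^b V` are the binary forms of degree `b`,
and each of them is a product of linear forms because `ℂ` is algebraically closed
(`exists_dual_factor`). So an element `x` in the kernel vanishes as a function, and then as a
symmetric tensor by polarization (`multilinear_eq_zero_of_diag`, `eq_zero_of_ev_const`): the map is
injective (`hermiteMap_injective`). Exchanging `a` and `b` gives an injection in the other direction,
so the two finite dimensions agree and `hermiteMap` is an isomorphism.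
-/

noncomputable section
open PiTensorProduct TensorProduct

namespace Foulkes

variable (V : Type) [AddCommGroup V] [Module ℂ V]
variable (W : Type) [AddCommGroup W] [Module ℂ W]

/-- The action of a permutation on the tensor power, permuting the tensor factors. -/
def permAct (n : ℕ) (π : Equiv.Perm (Fin n)) : (⨂[ℂ]^n V) ≃ₗ[ℂ] ⨂[ℂ]^n V :=
  PiTensorProduct.reindex ℂ (fun _ => V) π

/-- The subspace of symmetric tensors in the `n`-th tensor power. -/
def SymT (n : ℕ) : Submodule ℂ (⨂[ℂ]^n V) :=
  ⨅ π : Equiv.Perm (Fin n), LinearMap.ker ((permAct V n π).toLinearMap - LinearMap.id)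

lemma mem_SymT {n : ℕ} {x : ⨂[ℂ]^n V} :
    x ∈ SymT V n ↔ ∀ π : Equiv.Perm (Fin n), permAct V n π x = x := by
  simp [SymT, Submodule.mem_iInf, LinearMap.mem_ker, LinearMap.sub_apply, sub_eq_zero]

/-- The symmetrization operator on the `n`-th tensor power. -/
def symmetrize (n : ℕ) : (⨂[ℂ]^n V) →ₗ[ℂ] ⨂[ℂ]^n V :=
  ((n.factorial : ℂ))⁻¹ • ∑ π : Equiv.Perm (Fin n), (permAct V n π).toLinearMap

lemma permAct_symmetrize (n : ℕ) (π : Equiv.Perm (Fin n)) (x : ⨂[ℂ]^n V) :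
    permAct V n π (symmetrize V n x) = symmetrize V n x := by
  unfold symmetrize
  rw [LinearMap.smul_apply, map_smul, LinearMap.sum_apply, map_sum]
  congr 1
  refine Fintype.sum_equiv (Equiv.mulLeft π)
    (fun σ => permAct V n π ((permAct V n σ).toLinearMap x))
    (fun σ => (permAct V n σ).toLinearMap x) (fun σ => ?_)
  simp only [LinearEquiv.coe_coe, Equiv.coe_mulLeft]
  unfold permAct
  exact PiTensorProduct.reindex_reindex (σ : Fin n ≃ Fin n) (π : Fin n ≃ Fin n) x

lemma symmetrize_mem (n : ℕ) (x : ⨂[ℂ]^n V) : symmetrize V n x ∈ SymT V n :=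
  (mem_SymT V).2 fun π => permAct_symmetrize V n π x

/-- The canonical projection onto symmetric tensors. -/
def projSym (n : ℕ) : (⨂[ℂ]^n V) →ₗ[ℂ] SymT V n :=
  (symmetrize V n).codRestrict _ (symmetrize_mem V n)

variable {V W} in
lemma map_mem_SymT {n : ℕ} (f : V →ₗ[ℂ] W) {x : ⨂[ℂ]^n V} (hx : x ∈ SymT V n) :
    (PiTensorProduct.map fun _ => f) x ∈ SymT W n := by
  rw [mem_SymT] at hx ⊢
  intro π
  unfold permAct at hx ⊢
  have h := PiTensorProduct.map_reindex (fun _ : Fin n => f) (π : Fin n ≃ Fin n) x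
  rw [← h, hx π]

variable {V W} in
/-- The map on symmetric tensors induced functorially by a linear map. -/
def symMap (n : ℕ) (f : V →ₗ[ℂ] W) : SymT V n →ₗ[ℂ] SymT W n :=
  LinearMap.codRestrict _ ((PiTensorProduct.map fun _ => f) ∘ₗ (SymT V n).subtype)
    (fun x => map_mem_SymT f x.2)

lemma tprod_const_mem (n : ℕ) (v : V) : (tprod ℂ fun _ : Fin n => v) ∈ SymT V n := by
  simp [mem_SymT, permAct, PiTensorProduct.reindex_tprod]

/-! ### Polarization -/

section Polarization

variable {E F : Type} [AddCommGroup E] [Module ℂ E] [AddCommGroup F] [Module ℂ F]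

/-- The signed sum over the vertices `t ∈ {0, 1}ⁿ` of the cube of the monomial `∏ j, t (r j)` detects
surjectivity of `r`. The truncated exponent `1 - t i` makes the sign `-1` at `t i = 0` and `1` at
`t i = 1`. -/
lemma sum_cube_prod {n : ℕ} (r : Fin n → Fin n) :
    ∑ t : Fin n → Fin 2, (∏ i, (-1 : ℂ) ^ (1 - (t i : ℕ))) * ∏ j, ((t (r j) : ℕ) : ℂ)
      = if Function.Surjective r then 1 else 0 := by
  have key : ∀ t : Fin n → Fin 2,
      (∏ i, (-1 : ℂ) ^ (1 - (t i : ℕ))) * ∏ j, ((t (r j) : ℕ) : ℂ)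
        = ∏ i, ((-1 : ℂ) ^ (1 - (t i : ℕ)) *
            ((t i : ℕ) : ℂ) ^ (Finset.univ.filter fun j => r j = i).card) := by
    intro t
    rw [Finset.prod_mul_distrib]
    congr 1
    rw [← Finset.prod_fiberwise_of_maps_to (s := Finset.univ) (t := Finset.univ) (g := r)
      (fun _ _ => Finset.mem_univ _)]
    refine Finset.prod_congr rfl fun i _ => ?_
    rw [← Finset.prod_const]
    refine Finset.prod_congr rfl fun j hj => ?_
    rw [(Finset.mem_filter.1 hj).2]
  -- The summand is now a product over `i` of functions of `t i` alone, so the sum factors.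
  simp_rw [key]
  have h := Finset.prod_univ_sum (fun _ : Fin n => (Finset.univ : Finset (Fin 2)))
    (fun i x => (-1 : ℂ) ^ (1 - (x : ℕ)) *
            ((x : ℕ) : ℂ) ^ (Finset.univ.filter fun j => r j = i).card)
  rw [Fintype.piFinset_univ] at h
  rw [← h]
  simp only [Fin.sum_univ_two]
  split_ifs with hr
  · refine Finset.prod_eq_one fun i _ => ?_
    obtain ⟨j, hj⟩ := hr i
    have : (Finset.univ.filter fun j => r j = i).card ≠ 0 :=
      Finset.card_ne_zero_of_mem (a := j) (by simp [hj])
    simp [zero_pow this]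
  · simp only [Function.Surjective, not_forall, not_exists] at hr
    obtain ⟨i, hi⟩ := hr
    refine Finset.prod_eq_zero (Finset.mem_univ i) ?_
    simp [hi]

/-- Polarization: a symmetric multilinear map vanishing on the diagonal is zero. Evaluating it at the
diagonal points `∑ i, t i • w i` and taking the signed sum over `t ∈ {0, 1}ⁿ` leaves the terms
`m (w ∘ r)` with `r` a permutation, all equal to `m w`. -/
lemma multilinear_eq_zero_of_diag {n : ℕ} (m : MultilinearMap ℂ (fun _ : Fin n => E) F)
    (hs : ∀ (w : Fin n → E) (π : Equiv.Perm (Fin n)), m (w ∘ π) = m w)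
    (h0 : ∀ w : E, m (fun _ => w) = 0) (w : Fin n → E) : m w = 0 := by
  have h1 : ∑ t : Fin n → Fin 2, (∏ i, (-1 : ℂ) ^ (1 - (t i : ℕ))) •
      m (fun _ => ∑ i, ((t i : ℕ) : ℂ) • w i) = 0 :=
    Finset.sum_eq_zero fun t _ => by rw [h0, smul_zero]
  have h2 : ∀ t : Fin n → Fin 2, m (fun _ => ∑ i, ((t i : ℕ) : ℂ) • w i)
      = ∑ r : Fin n → Fin n, (∏ j, ((t (r j) : ℕ) : ℂ)) • m (w ∘ r) := by
    intro t
    rw [MultilinearMap.map_sum m (fun (_ : Fin n) (i : Fin n) => ((t i : ℕ) : ℂ) • w i)]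
    refine Finset.sum_congr rfl fun r _ => ?_
    exact m.map_smul_univ (fun j => ((t (r j) : ℕ) : ℂ)) (fun j => w (r j))
  simp_rw [h2, Finset.smul_sum, smul_smul] at h1
  rw [Finset.sum_comm] at h1
  simp_rw [← Finset.sum_smul, sum_cube_prod, ite_smul, zero_smul, one_smul] at h1
  rw [← Finset.sum_filter] at h1
  have h3 : ∀ r ∈ Finset.univ.filter (fun r : Fin n → Fin n => Function.Surjective r),
      m (w ∘ r) = m w := by
    intro r hr
    have hb : Function.Bijective r := Finite.surjective_iff_bijective.1 (Finset.mem_filter.1 hr).2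
    exact hs w (Equiv.ofBijective r hb)
  rw [Finset.sum_congr rfl h3, Finset.sum_const, ← Nat.cast_smul_eq_nsmul ℂ] at h1
  refine (smul_eq_zero.1 h1).resolve_left ?_
  exact Nat.cast_ne_zero.2 <| Finset.card_ne_zero_of_mem (a := id) (by simp [Function.surjective_id])

end Polarization

/-! ### Products of linear forms as functionals on tensor powers -/

section Evaluation

variable {E F : Type} [AddCommGroup E] [Module ℂ E] [AddCommGroup F] [Module ℂ F]

/-- The functional `f₁ ⊗ ⋯ ⊗ fₙ` on the `n`-th tensor power, `w₁ ⊗ ⋯ ⊗ wₙ ↦ ∏ i, fᵢ wᵢ`. -/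
def ev {n : ℕ} (f : Fin n → Module.Dual ℂ E) : Module.Dual ℂ (⨂[ℂ]^n E) :=
  PiTensorProduct.dualDistrib (tprod ℂ f)

lemma ev_tprod {n : ℕ} (f : Fin n → Module.Dual ℂ E) (w : Fin n → E) :
    ev f (tprod ℂ w) = ∏ i, f i (w i) :=
  PiTensorProduct.dualDistrib_apply f w

lemma ev_map {n : ℕ} (f : Fin n → Module.Dual ℂ F) (u : E →ₗ[ℂ] F) (x : ⨂[ℂ]^n E) :
    ev f (PiTensorProduct.map (fun _ => u) x) = ev (fun i => f i ∘ₗ u) x := by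
  have : ev f ∘ₗ PiTensorProduct.map (fun _ => u) = ev (fun i => f i ∘ₗ u) := by
    ext w
    simp [ev_tprod]
  exact LinearMap.congr_fun this x

lemma permAct_tprod {n : ℕ} (π : Equiv.Perm (Fin n)) (w : Fin n → E) :
    permAct E n π (tprod ℂ w) = tprod ℂ (w ∘ π.symm) :=
  PiTensorProduct.reindex_tprod _ _

lemma ev_permAct {n : ℕ} (f : Fin n → Module.Dual ℂ E) (π : Equiv.Perm (Fin n))
    (x : ⨂[ℂ]^n E) : ev f (permAct E n π x) = ev (f ∘ π) x := by
  have : ev f ∘ₗ (permAct E n π).toLinearMap = ev (f ∘ π) := by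
    ext w
    simp only [LinearMap.compMultilinearMap_apply, LinearMap.comp_apply, LinearEquiv.coe_coe,
      permAct_tprod, ev_tprod]
    rw [← Equiv.prod_comp π]
    exact Finset.prod_congr rfl fun i _ =>
      congrArg (fun j => f (π i) (w j)) (π.symm_apply_apply i)
  exact LinearMap.congr_fun this x

lemma ev_symmetrize {n : ℕ} (f : Fin n → Module.Dual ℂ E) (x : ⨂[ℂ]^n E) :
    ev f (symmetrize E n x)
      = ((n.factorial : ℂ))⁻¹ * ∑ π : Equiv.Perm (Fin n), ev (f ∘ π) x := by
  simp [symmetrize, LinearMap.sum_apply, map_sum, ev_permAct]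

lemma ev_comp_perm_of_mem {n : ℕ} (f : Fin n → Module.Dual ℂ E) (π : Equiv.Perm (Fin n))
    {x : ⨂[ℂ]^n E} (hx : x ∈ SymT E n) : ev (f ∘ π) x = ev f x := by
  rw [← ev_permAct, (mem_SymT E).1 hx π]

lemma factorial_avg (n : ℕ) (c : ℂ) :
    ((n.factorial : ℂ))⁻¹ * ∑ _π : Equiv.Perm (Fin n), c = c := by
  rw [Finset.sum_const, Finset.card_univ, Fintype.card_perm, Fintype.card_fin, nsmul_eq_mul,
    inv_mul_cancel_left₀ (by exact_mod_cast n.factorial_ne_zero)]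

lemma ev_const_symmetrize {n : ℕ} (f : Module.Dual ℂ E) (x : ⨂[ℂ]^n E) :
    ev (fun _ => f) (symmetrize E n x) = ev (fun _ => f) x := by
  rw [ev_symmetrize]
  exact factorial_avg n (ev (fun _ => f) x)

lemma symmetrize_of_mem {n : ℕ} {x : ⨂[ℂ]^n E} (hx : x ∈ SymT E n) :
    symmetrize E n x = x := by
  have h := (mem_SymT E).1 hx
  simp only [symmetrize, LinearMap.smul_apply, LinearMap.sum_apply, LinearEquiv.coe_coe, h]
  rw [Finset.sum_const, Finset.card_univ, Fintype.card_perm, Fintype.card_fin,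
    ← Nat.cast_smul_eq_nsmul ℂ, inv_smul_smul₀ (by exact_mod_cast n.factorial_ne_zero)]

lemma symmetrize_permAct {n : ℕ} (π : Equiv.Perm (Fin n)) (x : ⨂[ℂ]^n E) :
    symmetrize E n (permAct E n π x) = symmetrize E n x := by
  simp only [symmetrize, LinearMap.smul_apply, LinearMap.sum_apply, LinearEquiv.coe_coe]
  congr 1
  refine Fintype.sum_equiv (Equiv.mulRight π) _ _ fun σ => ?_
  exact PiTensorProduct.reindex_reindex (π : Fin n ≃ Fin n) (σ : Fin n ≃ Fin n) x

/-- A symmetric tensor, viewed as a polynomial function on the dual space, is zero as soon as that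
function vanishes: polarize, then use that products of linear forms span the dual of the tensor
power. -/
lemma eq_zero_of_ev_const [FiniteDimensional ℂ E] {n : ℕ} {x : ⨂[ℂ]^n E} (hx : x ∈ SymT E n)
    (h : ∀ f : Module.Dual ℂ E, ev (fun _ => f) x = 0) : x = 0 := by
  let m : MultilinearMap ℂ (fun _ : Fin n => Module.Dual ℂ E) ℂ :=
    (LinearMap.applyₗ x ∘ₗ PiTensorProduct.dualDistrib).compMultilinearMap (tprod ℂ)
  have hm : ∀ f, ev f x = 0 :=
    multilinear_eq_zero_of_diag m (fun f π => ev_comp_perm_of_mem f π hx) h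
  have hall : (LinearMap.applyₗ x ∘ₗ PiTensorProduct.dualDistrib :
      (⨂[ℂ]^n (Module.Dual ℂ E)) →ₗ[ℂ] ℂ) = 0 := by
    ext f
    exact hm f
  rw [← Module.forall_dual_apply_eq_zero_iff ℂ x]
  intro φ
  have := LinearMap.congr_fun hall ((PiTensorProduct.dualDistribEquiv).symm φ)
  have h2 : PiTensorProduct.dualDistrib ((PiTensorProduct.dualDistribEquiv).symm φ) = φ :=
    (PiTensorProduct.dualDistribEquiv (R := ℂ) (M := fun _ : Fin n => E)).apply_symm_apply φ
  rw [LinearMap.comp_apply, h2] at this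
  exact this

/-- The powers `v ⊗ ⋯ ⊗ v` determine a functional on the symmetric tensors. -/
lemma dual_symT_ext {n : ℕ} {φ ψ : Module.Dual ℂ (SymT E n)}
    (h : ∀ v : E, φ ⟨tprod ℂ fun _ => v, tprod_const_mem E n v⟩
      = ψ ⟨tprod ℂ fun _ => v, tprod_const_mem E n v⟩) : φ = ψ := by
  have h0 : ((φ - ψ) ∘ₗ projSym E n) = 0 := by
    ext w
    refine multilinear_eq_zero_of_diag
      (((φ - ψ) ∘ₗ projSym E n).compMultilinearMap (tprod ℂ)) (fun w π => ?_) (fun v => ?_) w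
    · have : projSym E n (tprod ℂ (w ∘ π)) = projSym E n (tprod ℂ w) := by
        ext1
        change symmetrize E n _ = symmetrize E n _
        rw [← symmetrize_permAct π⁻¹ (tprod ℂ w), permAct_tprod]
        rfl
      simp [this]
    · have : projSym E n (tprod ℂ fun _ => v) = ⟨tprod ℂ fun _ => v, tprod_const_mem E n v⟩ :=
        Subtype.ext (symmetrize_of_mem (tprod_const_mem E n v))
      simp [this, h]
  ext x
  have hx : projSym E n x = x := Subtype.ext (symmetrize_of_mem x.2)
  have := LinearMap.congr_fun h0 x
  simpa [hx, sub_eq_zero] using this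

end Evaluation

/-! ### Factorization of binary forms -/

section Factor

open Polynomial in
/-- A binary form of degree `b` over `ℂ`, given as the homogenization of a polynomial of degree at
most `b`, is a product of `b` linear forms. The scalar `c` is needed when `b = 0`. -/
lemma homogenize_factor (b : ℕ) : ∀ p : ℂ[X], p.natDegree ≤ b →
    ∃ (c : ℂ) (α β : Fin b → ℂ), ∀ s t : ℂ,
      MvPolynomial.eval ![s, t] (p.homogenize b) = c * ∏ i, (α i * s + β i * t) := by
  induction b with
  | zero =>
    intro p hp
    obtain ⟨c, rfl⟩ := Polynomial.natDegree_eq_zero.1 (Nat.le_zero.1 hp)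
    exact ⟨c, 0, 0, fun s t => by simp⟩
  | succ b ih =>
    intro p hp
    have aux : ∀ (l q : ℂ[X]) (α₀ β₀ : ℂ), l.natDegree ≤ 1 → q.natDegree ≤ b → p = l * q →
        (∀ s t, MvPolynomial.eval ![s, t] (l.homogenize 1) = α₀ * s + β₀ * t) →
        ∃ (c : ℂ) (α β : Fin (b + 1) → ℂ), ∀ s t : ℂ,
          MvPolynomial.eval ![s, t] (p.homogenize (b + 1))
            = c * ∏ i, (α i * s + β i * t) := by
      intro l q α₀ β₀ hl hq hpq he
      obtain ⟨c, α, β, h⟩ := ih q hq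
      refine ⟨c, Fin.cons α₀ α, Fin.cons β₀ β, fun s t => ?_⟩
      have hmul : p.homogenize (b + 1) = l.homogenize 1 * q.homogenize b := by
        rw [hpq, add_comm b 1, Polynomial.homogenize_mul l q hl hq]
      rw [hmul, map_mul, he, h, Fin.prod_univ_succ]
      simp only [Fin.cons_zero, Fin.cons_succ]
      ring
    -- Split off the factor `s - r t` for a root `r`, or `t` when the degree drops (a root at infinity).
    rcases Nat.lt_or_ge b p.natDegree with hlt | hle
    · have hdeg : p.degree ≠ 0 := by
        intro h0
        have := Polynomial.natDegree_eq_of_degree_eq_some (n := 0) h0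
        omega
      obtain ⟨r, hr⟩ := IsAlgClosed.exists_root p hdeg
      obtain ⟨q, hq⟩ := Polynomial.dvd_iff_isRoot.2 hr
      have hp0 : p ≠ 0 := by rintro rfl; simp at hlt
      have hq0 : q ≠ 0 := by rintro rfl; simp at hq; exact hp0 hq
      have hd : p.natDegree = 1 + q.natDegree := by
        rw [hq, Polynomial.natDegree_mul (Polynomial.X_sub_C_ne_zero r) hq0,
          Polynomial.natDegree_X_sub_C]
      refine aux (X - C r) q 1 (-r) (by simp) (by omega) hq fun s t => ?_
      simp [Polynomial.homogenize_sub]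
      ring
    · exact aux 1 p 0 1 (by simp) hle (by simp) fun s t => by simp

variable {V} in
/-- When `dim V = 2`, every functional on `Sym^b V` is a product of linear forms: its values on the
powers `v ⊗ ⋯ ⊗ v` are those of a binary form in the coordinates of `v`. -/
lemma exists_dual_factor (h2 : Module.finrank ℂ V = 2) (b : ℕ) (φ : Module.Dual ℂ (SymT V b)) :
    ∃ (c : ℂ) (l : Fin b → Module.Dual ℂ V), φ = c • (ev l ∘ₗ (SymT V b).subtype) := by
  have : FiniteDimensional ℂ V := FiniteDimensional.of_finrank_pos (by omega)
  let e := Module.finBasisOfFinrankEq ℂ V h2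
  let Ψ : MultilinearMap ℂ (fun _ : Fin b => V) ℂ :=
    (φ ∘ₗ projSym V b).compMultilinearMap (tprod ℂ)
  -- The dehomogenization of the binary form `v ↦ φ (v ⊗ ⋯ ⊗ v)`.
  let p : Polynomial ℂ := ∑ S : Finset (Fin b),
    Polynomial.monomial S.card (Ψ (S.piecewise (fun _ => e 0) (fun _ => e 1)))
  have hcard : ∀ S : Finset (Fin b), S.card ≤ b := fun S => by
    simpa using S.card_le_univ
  have hp : p.natDegree ≤ b :=
    Polynomial.natDegree_sum_le_of_forall_le _ _ fun S _ =>
      (Polynomial.natDegree_monomial_le _).trans (hcard S)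
  obtain ⟨c, α, β, h⟩ := homogenize_factor b p hp
  refine ⟨c, fun i => α i • e.coord 0 + β i • e.coord 1, dual_symT_ext fun v => ?_⟩
  have hv : v = e.repr v 0 • e 0 + e.repr v 1 • e 1 := by
    conv_lhs => rw [← e.sum_repr v, Fin.sum_univ_two]
  set s := e.repr v 0
  set t := e.repr v 1
  have hΨ : φ ⟨tprod ℂ fun _ => v, tprod_const_mem V b v⟩ = Ψ (fun _ => v) := by
    have : projSym V b (tprod ℂ fun _ => v) = ⟨tprod ℂ fun _ => v, tprod_const_mem V b v⟩ :=
        Subtype.ext (symmetrize_of_mem (tprod_const_mem V b v))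
    simp [Ψ, this]
  rw [hΨ]
  have hexp : Ψ (fun _ => v) = MvPolynomial.eval ![s, t] (p.homogenize b) := by
    have : (fun _ : Fin b => v) = (fun _ => s • e 0) + (fun _ => t • e 1) := by
      funext i; exact hv
    rw [this, Ψ.map_add_univ, Polynomial.homogenize_finsetSum, map_sum]
    refine Finset.sum_congr rfl fun S _ => ?_
    have hpw : S.piecewise (fun _ : Fin b => s • e 0) (fun _ => t • e 1)
        = fun i => (S.piecewise (fun _ => s) (fun _ => t) i : ℂ) •
            S.piecewise (fun _ : Fin b => e 0) (fun _ => e 1) i := by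
      funext i
      by_cases hi : i ∈ S <;> simp [hi]
    rw [hpw, Ψ.map_smul_univ, Finset.prod_piecewise, Polynomial.homogenize_monomial (hcard S),
      MvPolynomial.eval_monomial]
    have : (Finset.univ \ S).card = b - S.card := by
      rw [Finset.card_sdiff_of_subset (Finset.subset_univ S)]; simp
    simp [Finsupp.prod_fintype, Fin.prod_univ_two, this, mul_comm]
  rw [hexp, h]
  simp [ev_tprod, s, t]

end Factor

/-! ### The Hermite map -/

section Swap

variable {E F : Type} [AddCommGroup E] [Module ℂ E] [AddCommGroup F] [Module ℂ F]

/-- The projection of the tensor algebra onto its component of degree `a`. -/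
def tensorComponent (E : Type) [AddCommGroup E] [Module ℂ E] (a : ℕ) :
    TensorAlgebra ℂ E →ₗ[ℂ] ⨂[ℂ]^a E :=
  DirectSum.component ℂ ℕ (fun n => ⨂[ℂ]^n E) a ∘ₗ TensorAlgebra.toDirectSum.toLinearMap

lemma tensorComponent_prod {a : ℕ} (v : Fin a → E) :
    tensorComponent E a (List.ofFn fun i => TensorAlgebra.ι ℂ (v i)).prod = tprod ℂ v := by
  rw [← TensorAlgebra.tprod_apply]
  simp only [tensorComponent, LinearMap.comp_apply, AlgHom.toLinearMap_apply,
    TensorAlgebra.toDirectSum_tensorPower_tprod]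
  exact DirectSum.of_eq_same _ _

/-- The map `⨂^a (⨂^b E) → ⨂^b (⨂^a E)` transposing an `a × b` grid of tensor factors. It multiplies
the `a` given elements of `⨂^b E` inside the algebra `⨂^b T(E)`, where `T(E)` is the tensor algebra,
and takes the component of degree `a` in each of the `b` factors. -/
def swap (E : Type) [AddCommGroup E] [Module ℂ E] (a b : ℕ) :
    (⨂[ℂ]^a (⨂[ℂ]^b E)) →ₗ[ℂ] ⨂[ℂ]^b (⨂[ℂ]^a E) :=
  PiTensorProduct.map (fun _ => tensorComponent E a) ∘ₗ
    PiTensorProduct.lift ((MultilinearMap.mkPiAlgebraFin ℂ a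
      (⨂[ℂ]^b (TensorAlgebra ℂ E))).compLinearMap
        fun _ => PiTensorProduct.map fun _ => TensorAlgebra.ι ℂ)

lemma swap_tprod {a b : ℕ} (v : Fin a → Fin b → E) :
    swap E a b (tprod ℂ fun i => tprod ℂ (v i)) = tprod ℂ fun j => tprod ℂ fun i => v i j := by
  have hprod : (List.ofFn fun i => tprod ℂ fun j => TensorAlgebra.ι ℂ (v i j)).prod
      = (tprod ℂ fun j => (List.ofFn fun i => TensorAlgebra.ι ℂ (v i j)).prod :
          ⨂[ℂ]^b (TensorAlgebra ℂ E)) := by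
    have h := map_list_prod (PiTensorProduct.tprodMonoidHom ℂ (A := fun _ : Fin b => TensorAlgebra ℂ E))
      (List.ofFn fun i => fun j => TensorAlgebra.ι ℂ (v i j))
    have h' : (List.ofFn fun i => fun j => TensorAlgebra.ι ℂ (v i j)).prod
        = fun j => (List.ofFn fun i => TensorAlgebra.ι ℂ (v i j)).prod := by
      funext j
      rw [Pi.list_prod_apply, List.map_ofFn]
      rfl
    rw [h', List.map_ofFn] at h
    exact h.symm
  simp only [swap, LinearMap.comp_apply, PiTensorProduct.lift.tprod,
    MultilinearMap.compLinearMap_apply, PiTensorProduct.map_tprod,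
    MultilinearMap.mkPiAlgebraFin_apply, hprod, tensorComponent_prod]

/-- Linear maps on `⨂^a (⨂^b E)` agree if they agree on pure tensors of pure tensors. -/
lemma nested_ext {a b : ℕ} {φ ψ : (⨂[ℂ]^a (⨂[ℂ]^b E)) →ₗ[ℂ] F}
    (h : ∀ v : Fin a → Fin b → E, φ (tprod ℂ fun i => tprod ℂ (v i))
      = ψ (tprod ℂ fun i => tprod ℂ (v i))) : φ = ψ :=
  PiTensorProduct.ext_of_span_eq_top (g := fun _ (v : Fin b → E) => tprod ℂ v)
    (fun _ => PiTensorProduct.span_tprod_eq_top) h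

lemma swap_map {a b : ℕ} (g : E →ₗ[ℂ] F) (x : ⨂[ℂ]^a (⨂[ℂ]^b E)) :
    swap F a b (PiTensorProduct.map (fun _ => PiTensorProduct.map fun _ => g) x)
      = PiTensorProduct.map (fun _ => PiTensorProduct.map fun _ => g) (swap E a b x) := by
  have : swap F a b ∘ₗ PiTensorProduct.map (fun _ => PiTensorProduct.map fun _ => g)
      = PiTensorProduct.map (fun _ => PiTensorProduct.map fun _ => g) ∘ₗ swap E a b :=
    nested_ext fun v => by simp [swap_tprod]
  exact LinearMap.congr_fun this x

lemma ev_swap {a b : ℕ} (l : Fin b → Module.Dual ℂ E) (x : ⨂[ℂ]^a (⨂[ℂ]^b E)) :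
    ev (fun j => ev fun _ => l j) (swap E a b x) = ev (fun _ => ev l) x := by
  have : ev (fun j => ev fun _ => l j) ∘ₗ swap E a b = ev (fun _ => ev l) :=
    nested_ext fun v => by
      simp only [LinearMap.comp_apply, swap_tprod, ev_tprod]
      exact Finset.prod_comm
  exact LinearMap.congr_fun this x

lemma projSym_map {n : ℕ} (g : E →ₗ[ℂ] F) (x : ⨂[ℂ]^n E) :
    projSym F n (PiTensorProduct.map (fun _ => g) x) = symMap n g (projSym E n x) := by
  ext1
  change symmetrize F n _ = PiTensorProduct.map (fun _ => g) (symmetrize E n x)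
  simp only [symmetrize, LinearMap.smul_apply, LinearMap.sum_apply, LinearEquiv.coe_coe, map_smul,
    map_sum]
  congr 1
  refine Finset.sum_congr rfl fun π _ => ?_
  exact (PiTensorProduct.map_reindex (fun _ : Fin n => g) (π : Fin n ≃ Fin n) x).symm

/-- The Hermite map `Sym^a (Sym^b E) → Sym^b (Sym^a E)`: transpose the grid of tensor factors, then
symmetrize the inner and the outer tensor powers. -/
def hermiteMap (E : Type) [AddCommGroup E] [Module ℂ E] (a b : ℕ) :
    SymT (SymT E b) a →ₗ[ℂ] SymT (SymT E a) b :=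
  projSym (SymT E a) b ∘ₗ PiTensorProduct.map (fun _ => projSym E a) ∘ₗ swap E a b ∘ₗ
    PiTensorProduct.map (fun _ => (SymT E b).subtype) ∘ₗ (SymT (SymT E b) a).subtype

lemma map_map_apply {G : Type} [AddCommGroup G] [Module ℂ G] {n : ℕ} (f : F →ₗ[ℂ] G)
    (g : E →ₗ[ℂ] F) (x : ⨂[ℂ]^n E) :
    PiTensorProduct.map (fun _ => f) (PiTensorProduct.map (fun _ => g) x)
      = PiTensorProduct.map (fun _ => f ∘ₗ g) x := by
  rw [PiTensorProduct.map_comp]; rfl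

instance [FiniteDimensional ℂ E] (n : ℕ) : FiniteDimensional ℂ (SymT E n) :=
  FiniteDimensional.finiteDimensional_submodule _

lemma hermiteMap_symMap {a b : ℕ} (g : E →ₗ[ℂ] F) (x : SymT (SymT E b) a) :
    hermiteMap F a b (symMap a (symMap b g) x)
      = symMap b (symMap a g) (hermiteMap E a b x) := by
  have h1 : (SymT F b).subtype ∘ₗ symMap b g
      = PiTensorProduct.map (fun _ => g) ∘ₗ (SymT E b).subtype := rfl
  have h2 : projSym F a ∘ₗ PiTensorProduct.map (fun _ => g) = symMap a g ∘ₗ projSym E a :=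
    LinearMap.ext fun y => projSym_map g y
  have h3 : (SymT (SymT F b) a).subtype (symMap a (symMap b g) x)
      = PiTensorProduct.map (fun _ => symMap b g) ((SymT (SymT E b) a).subtype x) := rfl
  simp only [hermiteMap, LinearMap.comp_apply]
  rw [← projSym_map, h3, map_map_apply, h1, ← map_map_apply, swap_map, map_map_apply, h2,
    ← map_map_apply]

/-- The value of the Hermite map of `x` at `l₁^a ⊗ ⋯ ⊗ l_b^a` is the value of `x`, as a polynomial
function of degree `a` on the dual of `Sym^b E`, at the product `l₁ ⋯ l_b`. -/
lemma ev_hermiteMap {a b : ℕ} (l : Fin b → Module.Dual ℂ E) (x : SymT (SymT E b) a) :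
    ev (fun j => ev (fun _ => l j) ∘ₗ (SymT E a).subtype) (hermiteMap E a b x : ⨂[ℂ]^b (SymT E a))
      = ev (fun _ => ev l ∘ₗ (SymT E b).subtype) (x : ⨂[ℂ]^a (SymT E b)) := by
  change ev _ (symmetrize (SymT E a) b (PiTensorProduct.map (fun _ => projSym E a)
    (swap E a b (PiTensorProduct.map (fun _ => (SymT E b).subtype) x)))) = _
  rw [ev_symmetrize]
  refine Eq.trans ?_ (factorial_avg b _)
  congr 1
  refine Finset.sum_congr rfl fun π _ => ?_
  rw [ev_map]
  have h1 : (fun j => ((fun j => ev (fun _ => l j) ∘ₗ (SymT E a).subtype) ∘ π) j ∘ₗ projSym E a)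
      = fun j => ev (fun _ : Fin a => (l ∘ π) j) := by
    funext j
    exact LinearMap.ext fun y => ev_const_symmetrize (l (π j)) y
  have h2 : ev (l ∘ π) ∘ₗ (SymT E b).subtype = ev l ∘ₗ (SymT E b).subtype :=
    LinearMap.ext fun y => ev_comp_perm_of_mem l π y.2
  rw [h1, ev_swap, ev_map, h2]

lemma injective_of_ker {m n : ℕ} (f : SymT E m →ₗ[ℂ] SymT F n) (h : ∀ x, f x = 0 → x = 0) :
    Function.Injective f :=
  (injective_iff_map_eq_zero f).2 h

lemma exists_equiv_of_injective [FiniteDimensional ℂ E] [FiniteDimensional ℂ F] {m n : ℕ}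
    (f : SymT E m →ₗ[ℂ] SymT F n) (f' : SymT F n →ₗ[ℂ] SymT E m)
    (hf : Function.Injective f) (hf' : Function.Injective f') :
    ∃ e : SymT E m ≃ₗ[ℂ] SymT F n, ∀ x, e x = f x :=
  ⟨LinearEquiv.ofInjectiveOfFinrankEq f hf (le_antisymm
    (LinearMap.finrank_le_finrank_of_injective hf)
    (LinearMap.finrank_le_finrank_of_injective hf')), fun _ => rfl⟩

variable {V} in
/-- If the Hermite map kills `x`, then `x` vanishes at every product of linear forms; in dimension
two these exhaust the dual of `Sym^b V` up to scalars. -/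
lemma hermiteMap_injective (h2 : Module.finrank ℂ V = 2) (a b : ℕ) :
    Function.Injective (hermiteMap V a b) := by
  have : FiniteDimensional ℂ V := FiniteDimensional.of_finrank_pos (by omega)
  refine injective_of_ker _ fun x hx => Subtype.ext ?_
  refine eq_zero_of_ev_const x.2 fun φ => ?_
  obtain ⟨c, l, rfl⟩ := exists_dual_factor h2 b φ
  have h := ev_hermiteMap l x
  rw [hx] at h
  have hsm : ev (fun _ : Fin a => c • (ev l ∘ₗ (SymT V b).subtype))
      = c ^ a • ev (fun _ : Fin a => ev l ∘ₗ (SymT V b).subtype) := by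
    ext w
    simp [ev_tprod, Finset.prod_mul_distrib]
  rw [hsm, LinearMap.smul_apply, ← h]
  simp

end Swap

/-- **Hermite reciprocity.** If `dim V = 2` then `Sym^a Sym^b V` and `Sym^b Sym^a V`
are isomorphic as `GL(V)`-representations. -/
theorem hermite_reciprocity (a b : ℕ) (V : Type) [AddCommGroup V] [Module ℂ V]
    [FiniteDimensional ℂ V] (hdim : 2 ≤ Module.finrank ℂ V)
    (h2 : Module.finrank ℂ V = 2) :
    ∃ e : SymT (SymT V b) a ≃ₗ[ℂ] SymT (SymT V a) b,
      ∀ (g : V ≃ₗ[ℂ] V) (x : SymT (SymT V b) a),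
        e (symMap a (symMap b g.toLinearMap) x)
          = symMap b (symMap a g.toLinearMap) (e x) := by
  obtain ⟨e, he⟩ := exists_equiv_of_injective (hermiteMap V a b) (hermiteMap V b a)
    (hermiteMap_injective h2 a b) (hermiteMap_injective h2 b a)
  exact ⟨e, fun g x => by rw [he, he, hermiteMap_symMap]⟩

end Foulkes
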